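/- Let W be the Wiener measure on Ω and let α ∈ (0, 1/2]. Then for every ω̄ ∈ C_α^-, the upper local order satisfies overline-ord_loc W(ω̄) ≤ 2(α^{−1} − 1). -/

import Mathlib

open scoped ENNReal NNReal Topology
open Filter MeasureTheory Metric Set

noncomputable section

namespace Multifractal


/-- The `δ`-level Hausdorff pre-measure `H^h_δ` associated to a gauge `h`. -/
def hMeasAux {X : Type*} [MetricSpace X] (h : ℝ → ℝ) (δ : ℝ≥0∞) (E : Set X) : ℝ≥0∞ :=
  ⨅ (c : ℕ → X) (r : ℕ → ℝ) (_ : ∀ n, 0 < r n ∧ ENNReal.ofReal (r n) ≤ δ)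
    (_ : E ⊆ ⋃ n, Metric.ball (c n) (r n)), ∑' n, ENNReal.ofReal (h (r n))

/-- The `h`-Hausdorff measure. -/
def hMeas {X : Type*} [MetricSpace X] (h : ℝ → ℝ) (E : Set X) : ℝ≥0∞ :=
  ⨆ (δ : ℝ≥0∞) (_ : 0 < δ), hMeasAux h δ E

/-- `Ω`: continuous paths on `[0,1]` vanishing at `0`, with the uniform metric. -/
abbrev PathSpace : Type := {f : C(unitInterval, ℝ) // f 0 = 0}

instance : MeasurableSpace PathSpace := borel PathSpace
instance : BorelSpace PathSpace := ⟨rfl⟩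

/-- `μ` is a centered Gaussian process measure on path space with covariance `K`:
a probability measure under which every finite linear combination of coordinates
is a centered real Gaussian with the variance given by `K`. -/
def IsGaussianProcess (μ : Measure PathSpace) (K : unitInterval → unitInterval → ℝ) : Prop :=
  IsProbabilityMeasure μ ∧
  ∀ (n : ℕ) (t : Fin n → unitInterval) (c : Fin n → ℝ),
    Measure.map (fun ω : PathSpace => ∑ i, c i * ω.1 (t i)) μ =
      ProbabilityTheory.gaussianReal 0
        (Real.toNNReal (∑ i, ∑ j, c i * c j * K (t i) (t j)))

/-- `W` is the Wiener measure: the coordinate process is centered Gaussian with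
covariance `min s t`. -/
def IsWienerMeasure (W : Measure PathSpace) : Prop :=
  IsGaussianProcess W (fun s t => min (s : ℝ) (t : ℝ))

/-- `μ` is the law of fractional Brownian motion with Hurst parameter `H`. -/
def IsFBM (H : ℝ) (μ : Measure PathSpace) : Prop :=
  IsGaussianProcess μ (fun s t =>
    ((s : ℝ) ^ (2*H) + (t : ℝ) ^ (2*H) - |(t : ℝ) - (s : ℝ)| ^ (2*H)) / 2)

/-- Clamping of a real number into the unit interval. -/
def clampI (t : ℝ) : unitInterval :=
  ⟨min (max t 0) 1, Set.mem_Icc.mpr ⟨le_min (le_max_right _ _) zero_le_one, min_le_right _ _⟩⟩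

/-- The grid point `j/n` of the unit interval. -/
def gridPt (n j : ℕ) : unitInterval := clampI ((j : ℝ) / n)

/-- The discrete quadratic variation `Q_n(ω)`. -/
def Qvar (ω : PathSpace) (n : ℕ) : ℝ :=
  Real.sqrt ((1 / (n : ℝ)) *
    ∑ i ∈ Finset.range n, (ω.1 (gridPt n (i+1)) - ω.1 (gridPt n i)) ^ 2)

/-- Lower Orey exponent `q^-(ω)`. -/
def oreyLower (ω : PathSpace) : EReal :=
  liminf (fun n : ℕ => ((-Real.log (Qvar ω n) / Real.log n : ℝ) : EReal)) atTop

/-- Upper Orey exponent `q^+(ω)`. -/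
def oreyUpper (ω : PathSpace) : EReal :=
  limsup (fun n : ℕ => ((-Real.log (Qvar ω n) / Real.log n : ℝ) : EReal)) atTop

/-- The set `C_a` of `a`-Hölder paths. -/
def holderSet (a : ℝ) : Set PathSpace :=
  {ω | ∃ C : ℝ, ∀ x y : unitInterval, |ω.1 x - ω.1 y| ≤ C * |(x : ℝ) - (y : ℝ)| ^ a}

/-- The set `C_a^- = ⋂_{0<b<a} C_b` of nearly `a`-Hölder paths. -/
def holderMinus (a : ℝ) : Set PathSpace := ⋂ b ∈ Set.Ioo (0:ℝ) a, holderSet b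

/-- The set `C_q^crit` of critical `q`-Hölder paths: nearly `q`-Hölder paths whose
Orey exponent exists and equals `q`. -/
def holderCrit (q : ℝ) : Set PathSpace :=
  {ω | ω ∈ holderMinus q ∧ oreyLower ω = (q : EReal) ∧ oreyUpper ω = (q : EReal)}

/-- The set `Ω^crit` of critical Hölder paths. -/
def pathCrit : Set PathSpace := ⋃ q ∈ Set.Ioo (0:ℝ) 1, holderCrit q

/-- The lower local order of a measure `μ` on path space at `ω`. -/
def lowerLocOrd (μ : Measure PathSpace) (ω : PathSpace) : EReal :=
  liminf (fun ε : ℝ =>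
    ((Real.log (-Real.log ((μ (Metric.ball ω ε)).toReal)) / (-Real.log ε) : ℝ) : EReal))
    (𝓝[>] (0:ℝ))

/-- The upper local order of a measure `μ` on path space at `ω`. -/
def upperLocOrd (μ : Measure PathSpace) (ω : PathSpace) : EReal :=
  limsup (fun ε : ℝ =>
    ((Real.log (-Real.log ((μ (Metric.ball ω ε)).toReal)) / (-Real.log ε) : ℝ) : EReal))
    (𝓝[>] (0:ℝ))

/-- The Hausdorff order of a set of paths: `sup {α > 0 : H^{h_α}(A) = ∞}` where
`h_α(ε) = exp(-ε^{-α})`. -/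
def ordH (A : Set PathSpace) : ℝ≥0∞ :=
  ⨆ (α : ℝ) (_ : 0 < α ∧ hMeas (fun ε : ℝ => Real.exp (-(ε ^ (-α)))) A = ∞),
    ENNReal.ofReal α

/-- The level set `E(ξ)` of paths at which the local order of `μ` exists and
equals `ξ`. -/
def levelOrd (μ : Measure PathSpace) (ξ : ℝ) : Set PathSpace :=
  {ω | lowerLocOrd μ ω = (ξ : EReal) ∧ upperLocOrd μ ω = (ξ : EReal)}

/-- The cylinder `C_n(ω̄, ε)` around `ω̄` of depth `n` and radius `ε`. -/
def cylinder (ωb : PathSpace) (n : ℕ) (ε : ℝ) : Set PathSpace :=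
  {ω | ∀ j ∈ Finset.Icc 1 n, |ω.1 (gridPt n j) - ωb.1 (gridPt n j)| ≤ ε}

/-- The affine interpolation `L̄_j` of `ω̄` on `[(j-1)/n, j/n]`, evaluated at `t`. -/
def affInterp (ωb : PathSpace) (n j : ℕ) (t : ℝ) : ℝ :=
  ωb.1 (gridPt n (j-1)) +
    (t - ((j-1 : ℕ) : ℝ) / n) * n * (ωb.1 (gridPt n j) - ωb.1 (gridPt n (j-1)))

/-- The maximal deviation `Δ_n(ω̄)` of `ω̄` from its chords on the `1/n`-grid. -/
def chordDev (ωb : PathSpace) (n : ℕ) : ℝ :=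
  sSup {d : ℝ | ∃ j ∈ Finset.Icc 1 n, ∃ t ∈ Set.Icc (((j-1 : ℕ) : ℝ) / n) ((j : ℝ) / n),
    d = |ωb.1 (clampI t) - affInterp ωb n j t|}


open ProbabilityTheory in
/-- The coordinate process is a Gaussian process under the Wiener measure. -/
lemma IsWienerMeasure.isGaussianProcess_eval {W : Measure PathSpace} (hW : IsWienerMeasure W) :
    ProbabilityTheory.IsGaussianProcess (fun (t : unitInterval) (ω : PathSpace) => ω.1 t) W where
  hasGaussianLaw I := by
    have hmeas : Measurable (fun ω : PathSpace => I.restrict (fun t => ω.1 t)) :=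
      measurable_pi_lambda _ fun t =>
        Continuous.measurable ((continuous_eval_const t.1).comp continuous_subtype_val)
    refine ⟨isGaussian_of_map_eq_gaussianReal fun L => ?_⟩
    rw [Measure.map_map (by fun_prop) hmeas]
    let e := I.equivFin.symm
    refine ⟨0, _, Eq.trans ?_
      (hW.2 I.card (fun i => (e i).1) (fun i => L (Pi.single (e i) 1)))⟩
    congr 1
    ext ω
    simp only [Function.comp_apply]
    rw [← Equiv.sum_comp e.symm]
    simp only [Equiv.apply_symm_apply]
    conv_lhs => rw [← Finset.univ_sum_single (I.restrict (fun t => ω.1 t)), map_sum]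
    refine Finset.sum_congr rfl fun t _ => ?_
    rw [show Pi.single t (I.restrict (fun t => ω.1 t) t)
      = (ω.1 t.1) • (Pi.single t (1 : ℝ) : I → ℝ) by
        rw [← Pi.single_smul]; simp [Finset.restrict], map_smul, smul_eq_mul, mul_comm]

lemma IsWienerMeasure.memLp_eval {W : Measure PathSpace} (hW : IsWienerMeasure W)
    (t : unitInterval) : MemLp (fun ω : PathSpace => ω.1 t) 2 W :=
  (hW.isGaussianProcess_eval.hasGaussianLaw_eval t).memLp_two

lemma IsWienerMeasure.memLp_sub_half {W : Measure PathSpace} (hW : IsWienerMeasure W)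
    (s t : unitInterval) : MemLp (fun ω : PathSpace => ω.1 s - 2⁻¹ * ω.1 t) 2 W :=
  (hW.memLp_eval s).sub ((hW.memLp_eval t).const_mul _)

lemma measurable_eval (t : unitInterval) : Measurable (fun ω : PathSpace => ω.1 t) :=
  Continuous.measurable ((continuous_eval_const t).comp continuous_subtype_val)

open ProbabilityTheory in
lemma variance_eq_of_map_eq_gaussianReal {Ω : Type*} {mΩ : MeasurableSpace Ω} {P : Measure Ω}
    {X : Ω → ℝ} {v : ℝ≥0} (hX : Measurable X) (h : P.map X = gaussianReal 0 v) :
    Var[X; P] = v := by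
  rw [← variance_id_gaussianReal (μ := 0) (v := v), ← h, variance_map (by fun_prop) (by fun_prop)]
  rfl

open ProbabilityTheory in
lemma IsWienerMeasure.covariance_eval {W : Measure PathSpace} (hW : IsWienerMeasure W)
    (s t : unitInterval) :
    cov[fun ω : PathSpace => ω.1 s, fun ω : PathSpace => ω.1 t; W] = min (s : ℝ) t := by
  have := hW.1
  have hvar : ∀ u : unitInterval, Var[fun ω : PathSpace => ω.1 u; W] = u := by
    intro u
    have h := hW.2 1 (fun _ => u) (fun _ => 1)
    simp only [Finset.univ_unique, Finset.sum_singleton, one_mul, min_self] at h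
    rw [variance_eq_of_map_eq_gaussianReal (measurable_eval u) h, Real.coe_toNNReal _ u.2.1]
  have h := hW.2 2 ![s, t] (fun _ => 1)
  simp only [Fin.sum_univ_two, one_mul, Matrix.cons_val_zero, Matrix.cons_val_one,
    min_self] at h
  have h2 := variance_eq_of_map_eq_gaussianReal
    ((measurable_eval s).add (measurable_eval t)) h
  rw [variance_add (hW.memLp_eval s) (hW.memLp_eval t), hvar, hvar, Real.coe_toNNReal] at h2
  · rw [min_comm (t : ℝ) s] at h2; linarith
  · have := s.2.1; have := t.2.1
    positivity

/-- The Schauder coefficient of a path at the dyadic interval `[i / 2 ^ k, (i + 1) / 2 ^ k]`: the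
deviation of the path from its chord at the midpoint. -/
def schauder (k i : ℕ) (ω : PathSpace) : ℝ :=
  ω.1 (gridPt (2 ^ (k + 1)) (2 * i + 1)) -
    2⁻¹ * ω.1 (gridPt (2 ^ k) i) - 2⁻¹ * ω.1 (gridPt (2 ^ k) (i + 1))

lemma measurable_schauder (k i : ℕ) : Measurable (schauder k i) :=
  ((measurable_eval _).sub ((measurable_eval _).const_mul _)).sub ((measurable_eval _).const_mul _)

lemma coe_gridPt {n j : ℕ} (h : j ≤ n) : (gridPt n j : ℝ) = j / n := by
  have h1 : (0 : ℝ) ≤ (j : ℝ) / n := by positivity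
  have h2 : (j : ℝ) / n ≤ 1 := div_le_one_of_le₀ (by exact_mod_cast h) (by positivity)
  simp [gridPt, clampI, h1, h2]

lemma gridPt_two_pow_succ (k j : ℕ) : gridPt (2 ^ (k + 1)) (2 * j) = gridPt (2 ^ k) j := by
  unfold gridPt
  congr 1
  push_cast
  rw [pow_succ]
  field_simp

lemma gridPt_two_pow_add (k l j : ℕ) : gridPt (2 ^ (k + l)) (2 ^ l * j) = gridPt (2 ^ k) j := by
  unfold gridPt
  congr 1
  push_cast
  rw [pow_add]
  field_simp

open ProbabilityTheory in
/-- A Schauder coefficient is uncorrelated with the path outside the underlying interval. -/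
lemma IsWienerMeasure.covariance_schauder_eval {W : Measure PathSpace} (hW : IsWienerMeasure W)
    {k i : ℕ} (hi : i < 2 ^ k) (s : unitInterval)
    (hs : (s : ℝ) ≤ i / 2 ^ k ∨ ((i : ℝ) + 1) / 2 ^ k ≤ s) :
    cov[schauder k i, fun ω : PathSpace => ω.1 s; W] = 0 := by
  have := hW.1
  have hm := hW.memLp_eval
  unfold schauder
  rw [covariance_fun_sub_left (hW.memLp_sub_half _ _) ((hm _).const_mul _) (hm _),
    covariance_fun_sub_left (hm _) ((hm _).const_mul _) (hm _),
    covariance_const_mul_left, covariance_const_mul_left, hW.covariance_eval,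
    hW.covariance_eval, hW.covariance_eval,
    coe_gridPt (by rw [pow_succ]; omega), coe_gridPt hi.le, coe_gridPt hi]
  push_cast
  have hmid : (2 * (i : ℝ) + 1) / 2 ^ (k + 1) = 2⁻¹ * (i / 2 ^ k) + 2⁻¹ * ((i + 1) / 2 ^ k) := by
    rw [pow_succ]; field_simp; ring
  have hlr : (i : ℝ) / 2 ^ k ≤ (i + 1) / 2 ^ k := by gcongr; linarith
  rw [hmid]
  rcases hs with hs | hs
  · rw [min_eq_right, min_eq_right, min_eq_right] <;> linarith
  · rw [min_eq_left, min_eq_left, min_eq_left] <;> linarith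

lemma IsWienerMeasure.memLp_schauder {W : Measure PathSpace} (hW : IsWienerMeasure W)
    (k i : ℕ) : MemLp (schauder k i) 2 W :=
  (hW.memLp_sub_half _ _).sub ((hW.memLp_eval _).const_mul _)

open ProbabilityTheory in
lemma covariance_schauder_right {W : Measure PathSpace} (hW : IsWienerMeasure W)
    {X : PathSpace → ℝ} (hX : MemLp X 2 W) (k i : ℕ)
    (h₁ : cov[X, fun ω => ω.1 (gridPt (2 ^ (k + 1)) (2 * i + 1)); W] = 0)
    (h₂ : cov[X, fun ω => ω.1 (gridPt (2 ^ k) i); W] = 0)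
    (h₃ : cov[X, fun ω => ω.1 (gridPt (2 ^ k) (i + 1)); W] = 0) :
    cov[X, schauder k i; W] = 0 := by
  have := hW.1
  have hm := hW.memLp_eval
  unfold schauder
  rw [covariance_fun_sub_right hX (hW.memLp_sub_half _ _) ((hm _).const_mul _),
    covariance_fun_sub_right hX (hm _) ((hm _).const_mul _),
    covariance_const_mul_right, covariance_const_mul_right, h₁, h₂, h₃]
  simp

open ProbabilityTheory in
/-- Grid points of a coarser dyadic grid do not meet the interior of a dyadic interval. -/
lemma IsWienerMeasure.covariance_schauder_gridPt {W : Measure PathSpace} (hW : IsWienerMeasure W)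
    {k i l j : ℕ} (hi : i < 2 ^ k) (hl : l ≤ k) (hj : j ≤ 2 ^ l) :
    cov[schauder k i, fun ω : PathSpace => ω.1 (gridPt (2 ^ l) j); W] = 0 := by
  obtain ⟨d, rfl⟩ := Nat.exists_eq_add_of_le hl
  rw [← gridPt_two_pow_add l d j]
  have hj' : 2 ^ d * j ≤ 2 ^ (l + d) := by rw [pow_add, mul_comm]; gcongr
  refine hW.covariance_schauder_eval hi _ ?_
  rw [coe_gridPt hj', Nat.cast_pow]
  rcases Nat.lt_or_ge i (2 ^ d * j) with h | h
  · right
    have : (i : ℝ) + 1 ≤ ((2 ^ d * j : ℕ) : ℝ) := by exact_mod_cast h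
    gcongr; norm_num
  · left
    have : ((2 ^ d * j : ℕ) : ℝ) ≤ i := by exact_mod_cast h
    gcongr; norm_num

open ProbabilityTheory in
lemma IsWienerMeasure.covariance_schauder_of_lt {W : Measure PathSpace} (hW : IsWienerMeasure W)
    {k i l j : ℕ} (hi : i < 2 ^ k) (hl : l < k) (hj : j < 2 ^ l) :
    cov[schauder k i, schauder l j; W] = 0 :=
  covariance_schauder_right hW (hW.memLp_schauder k i) l j
    (hW.covariance_schauder_gridPt hi hl (by rw [pow_succ]; omega))
    (hW.covariance_schauder_gridPt hi hl.le hj.le)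
    (hW.covariance_schauder_gridPt hi hl.le hj)

open ProbabilityTheory in
lemma IsWienerMeasure.covariance_schauder_of_ne {W : Measure PathSpace} (hW : IsWienerMeasure W)
    {k i j : ℕ} (hi : i < 2 ^ k) (hj : j < 2 ^ k) (hij : i ≠ j) :
    cov[schauder k i, schauder k j; W] = 0 := by
  refine covariance_schauder_right hW (hW.memLp_schauder k i) k j
    (hW.covariance_schauder_eval hi _ ?_)
    (hW.covariance_schauder_gridPt hi le_rfl hj.le)
    (hW.covariance_schauder_gridPt hi le_rfl hj)
  rw [coe_gridPt (by rw [pow_succ]; omega)]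
  push_cast
  rw [pow_succ]
  rcases lt_or_gt_of_ne hij with h | h
  · right
    have : (i : ℝ) + 1 ≤ j := by exact_mod_cast h
    rw [div_le_div_iff₀ (by positivity) (by positivity)]
    have : (0 : ℝ) < 2 ^ k := by positivity
    nlinarith
  · left
    have : (j : ℝ) + 1 ≤ i := by exact_mod_cast h
    rw [div_le_div_iff₀ (by positivity) (by positivity)]
    have : (0 : ℝ) < 2 ^ k := by positivity
    nlinarith

open ProbabilityTheory in
lemma IsWienerMeasure.map_schauder {W : Measure PathSpace} (hW : IsWienerMeasure W)
    {k i : ℕ} (hi : i < 2 ^ k) :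
    W.map (schauder k i) = gaussianReal 0 (2 ^ (k + 2))⁻¹ := by
  have h := hW.2 3 ![gridPt (2 ^ (k + 1)) (2 * i + 1), gridPt (2 ^ k) i, gridPt (2 ^ k) (i + 1)]
    ![1, -2⁻¹, -2⁻¹]
  have hmid : (2 * (i : ℝ) + 1) / 2 ^ (k + 1) = 2⁻¹ * (i / 2 ^ k) + 2⁻¹ * ((i + 1) / 2 ^ k) := by
    rw [pow_succ]; field_simp; ring
  have hlr : (i : ℝ) / 2 ^ k ≤ (i + 1) / 2 ^ k := by gcongr; linarith
  simp only [Fin.sum_univ_three, Matrix.cons_val_zero, Matrix.cons_val_one, Matrix.cons_val,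
    min_self] at h
  rw [coe_gridPt (by rw [pow_succ]; omega), coe_gridPt hi.le, coe_gridPt hi] at h
  push_cast at h
  rw [hmid, min_eq_right (a := 2⁻¹ * ((i : ℝ) / 2 ^ k) + 2⁻¹ * ((i + 1) / 2 ^ k)) (by linarith),
    min_eq_left (b := 2⁻¹ * ((i : ℝ) / 2 ^ k) + 2⁻¹ * ((i + 1) / 2 ^ k)) (by linarith),
    min_eq_left (b := ((i : ℝ) + 1) / 2 ^ k) (by linarith),
    min_eq_right (a := ((i : ℝ) + 1) / 2 ^ k) (by linarith), min_eq_left hlr,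
    min_eq_right hlr] at h
  convert h using 2
  · ext ω
    simp only [schauder]
    ring
  · rw [← NNReal.coe_inj, Real.coe_toNNReal]
    · push_cast
      rw [pow_add]
      field_simp
      ring
    · have : (0 : ℝ) ≤ 1 / 2 ^ k := by positivity
      field_simp at this ⊢
      ring_nf
      norm_num

open ProbabilityTheory in
lemma IsWienerMeasure.map_eval_one {W : Measure PathSpace} (hW : IsWienerMeasure W) :
    W.map (fun ω => ω.1 (gridPt (2 ^ 0) 1)) = gaussianReal 0 1 := by
  have h := hW.2 1 (fun _ => gridPt (2 ^ 0) 1) (fun _ => 1)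
  simp only [Finset.univ_unique, Finset.sum_singleton, one_mul, min_self,
    coe_gridPt (n := 2 ^ 0) (j := 1) (by simp)] at h
  simpa using h

open ProbabilityTheory in
/-- Lower bound for the mass that a centered Gaussian of variance at most one gives to an
interval. -/
lemma le_gaussianReal_real_closedBall {v : ℝ≥0} (hv : v ≠ 0) (hv1 : v ≤ 1) (a : ℝ) {r : ℝ}
    (hr : 0 ≤ r) :
    r * Real.exp (-1 - (|a| + r) ^ 2 / (2 * v)) ≤ (gaussianReal 0 v).real (closedBall a r) := by
  have hv0 : (0 : ℝ) < v := by positivity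
  have hsqrt : √(2 * Real.pi * v) ≤ 2 * Real.exp 1 := by
    rw [Real.sqrt_le_left (by positivity)]
    have h1 : (v : ℝ) ≤ 1 := by exact_mod_cast hv1
    have h2 := Real.pi_lt_four
    have h3 := Real.pi_pos
    have h4 : (2 : ℝ) ≤ Real.exp 1 := by linarith [Real.add_one_le_exp 1]
    nlinarith [mul_nonneg h3.le (sub_nonneg.2 h1)]
  have hpdf : ∀ x ∈ closedBall a r,
      2⁻¹ * Real.exp (-1 - (|a| + r) ^ 2 / (2 * v)) ≤ gaussianPDFReal 0 v x := by
    intro x hx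
    rw [mem_closedBall, Real.dist_eq] at hx
    have hx' : |x| ≤ |a| + r := by
      have := abs_add_le (x - a) a
      rw [sub_add_cancel] at this
      linarith
    simp only [gaussianPDFReal_def, sub_zero]
    rw [sub_eq_add_neg, Real.exp_add, ← mul_assoc, Real.exp_neg 1,
      ← mul_inv, ← neg_div]
    refine mul_le_mul (inv_anti₀ (by positivity) hsqrt) (Real.exp_le_exp.2 ?_)
      (by positivity) (by positivity)
    have : x ^ 2 ≤ (|a| + r) ^ 2 := by rw [← sq_abs x]; gcongr
    gcongr
  rw [Measure.real, gaussianReal_apply_eq_integral 0 hv,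
    ENNReal.toReal_ofReal (integral_nonneg fun x => gaussianPDFReal_nonneg _ _ _)]
  calc r * Real.exp (-1 - (|a| + r) ^ 2 / (2 * v))
      = ∫ _ in closedBall a r, 2⁻¹ * Real.exp (-1 - (|a| + r) ^ 2 / (2 * v)) := by
        rw [setIntegral_const, Real.volume_real_closedBall hr, smul_eq_mul]
        ring
    _ ≤ _ := setIntegral_mono_on (integrableOn_const measure_closedBall_lt_top.ne)
        (integrable_gaussianPDFReal 0 v).integrableOn measurableSet_closedBall hpdf

open ProbabilityTheory in
lemma one_sub_le_gaussianReal_real_closedBall (v : ℝ≥0) {r : ℝ} (hr : 0 ≤ r) :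
    1 - 2 * Real.exp (-r ^ 2 / (2 * v)) ≤ (gaussianReal 0 v).real (closedBall 0 r) := by
  have hsub : HasSubgaussianMGF id v (gaussianReal 0 v) :=
    ⟨fun t => integrable_exp_mul_gaussianReal t, fun t => by simp [mgf_id_gaussianReal]⟩
  have h1 := hsub.measure_ge_le hr
  have h2 := hsub.neg.measure_ge_le hr
  have hcompl : (closedBall (0 : ℝ) r)ᶜ ⊆ {x | r ≤ id x} ∪ {x | r ≤ (-id) x} := by
    intro x hx
    simp only [mem_compl_iff, mem_closedBall, dist_zero_right, Real.norm_eq_abs, not_le] at hx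
    rcases lt_abs.1 hx with h | h
    · exact Or.inl h.le
    · exact Or.inr h.le
  have h3 := (measureReal_mono hcompl (measure_ne_top (gaussianReal 0 v) _)).trans
    (measureReal_union_le _ _)
  rw [probReal_compl_eq_one_sub measurableSet_closedBall] at h3
  linarith

lemma exp_neg_two_mul_le {p : ℝ} (h0 : 0 ≤ p) (h1 : p ≤ 1 / 2) :
    Real.exp (-(2 * p)) ≤ 1 - p := by
  rw [Real.exp_neg, inv_le_comm₀ (Real.exp_pos _) (by linarith)]
  refine le_trans ?_ (Real.add_one_le_exp _)
  rw [inv_le_iff_one_le_mul₀ (by linarith)]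
  nlinarith

/-- The value at time one together with the Schauder coefficients of the first `K` levels. -/
def schauderFamily (K : ℕ) : Option (Σ k : Fin K, Fin (2 ^ (k : ℕ))) → PathSpace → ℝ
  | none => fun ω => ω.1 (gridPt (2 ^ 0) 1)
  | some p => schauder p.1 p.2

lemma IsWienerMeasure.hasGaussianLaw_schauderFamily {W : Measure PathSpace}
    (hW : IsWienerMeasure W) (K : ℕ) :
    ProbabilityTheory.HasGaussianLaw (fun ω => (schauderFamily K · ω)) W := by
  classical
  have hproc : ProbabilityTheory.IsGaussianProcess (schauderFamily K) W := by
    refine hW.isGaussianProcess_eval.of_isGaussianProcess fun p => ?_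
    rcases p with _ | p
    · exact ⟨{gridPt (2 ^ 0) 1}, .proj ⟨_, Finset.mem_singleton_self _⟩, fun ω => rfl⟩
    · refine ⟨{gridPt (2 ^ ((p.1 : ℕ) + 1)) (2 * p.2 + 1), gridPt (2 ^ (p.1 : ℕ)) p.2,
        gridPt (2 ^ (p.1 : ℕ)) (p.2 + 1)},
        .proj ⟨gridPt (2 ^ ((p.1 : ℕ) + 1)) (2 * p.2 + 1), by simp⟩ -
        (2⁻¹ : ℝ) • .proj ⟨gridPt (2 ^ (p.1 : ℕ)) p.2, by simp⟩ -
        (2⁻¹ : ℝ) • .proj ⟨gridPt (2 ^ (p.1 : ℕ)) (p.2 + 1), by simp⟩, fun ω => ?_⟩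
      simp [schauderFamily, schauder]
  exact (hproc.hasGaussianLaw Finset.univ).map
    (.pi fun p => .proj (⟨p, Finset.mem_univ p⟩ : {p // p ∈ Finset.univ}))

open ProbabilityTheory in
/-- The Schauder coefficients of Brownian motion are independent. -/
lemma IsWienerMeasure.iIndepFun_schauderFamily {W : Measure PathSpace}
    (hW : IsWienerMeasure W) (K : ℕ) : iIndepFun (schauderFamily K) W := by
  refine (hW.hasGaussianLaw_schauderFamily K).iIndepFun_of_covariance_eq_zero fun p q hpq => ?_
  have hnone : ∀ q : Σ k : Fin K, Fin (2 ^ (k : ℕ)),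
      cov[schauder q.1 q.2, fun ω : PathSpace => ω.1 (gridPt (2 ^ 0) 1); W] = 0 := fun q =>
    hW.covariance_schauder_gridPt q.2.2 (Nat.zero_le _) (by simp)
  rcases p with _ | ⟨k, i⟩ <;> rcases q with _ | ⟨l, j⟩
  · exact absurd rfl hpq
  · rw [covariance_comm]
    exact hnone _
  · exact hnone _
  · rcases lt_trichotomy k l with h | rfl | h
    · rw [covariance_comm]
      exact hW.covariance_schauder_of_lt j.2 h i.2
    · refine hW.covariance_schauder_of_ne i.2 j.2 fun hij => hpq ?_
      obtain rfl : i = j := Fin.ext hij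
      rfl
    · exact hW.covariance_schauder_of_lt i.2 h j.2

open ProbabilityTheory in
lemma IsWienerMeasure.exp_neg_le_measure_schauder_lt {W : Measure PathSpace}
    (hW : IsWienerMeasure W) (K : ℕ) {S₁ : Set ℝ} {S : ℕ → ℕ → Set ℝ} {a₁ : ℝ} {a : ℕ → ℝ}
    (hS₁ : MeasurableSet S₁) (hS : ∀ k i, MeasurableSet (S k i))
    (h₁ : Real.exp (-a₁) ≤ (gaussianReal 0 1).real S₁)
    (h : ∀ k, ∀ i < 2 ^ k, Real.exp (-a k) ≤ (gaussianReal 0 (2 ^ (k + 2))⁻¹).real (S k i)) :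
    Real.exp (-(a₁ + ∑ k ∈ Finset.range K, 2 ^ k * a k)) ≤
      W.real {ω | ω.1 (gridPt (2 ^ 0) 1) ∈ S₁ ∧ ∀ k < K, ∀ i < 2 ^ k, schauder k i ω ∈ S k i} := by
  let T : Option (Σ k : Fin K, Fin (2 ^ (k : ℕ))) → Set ℝ := fun p =>
    p.elim S₁ fun p => S p.1 p.2
  have hT : ∀ p, MeasurableSet (T p) := by
    rintro (_ | p)
    · exact hS₁
    · exact hS _ _
  have hset : {ω : PathSpace | ω.1 (gridPt (2 ^ 0) 1) ∈ S₁ ∧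
      ∀ k < K, ∀ i < 2 ^ k, schauder k i ω ∈ S k i} =
      ⋂ p ∈ Finset.univ, schauderFamily K p ⁻¹' T p := by
    ext ω
    simp only [mem_ofPred_eq, Finset.mem_univ, iInter_true, mem_iInter, mem_preimage]
    refine ⟨fun ⟨h1, h2⟩ p => ?_, fun h => ⟨h none, fun k hk i hi => h (some ⟨⟨k, hk⟩, ⟨i, hi⟩⟩)⟩⟩
    rcases p with _ | p
    · exact h1
    · exact h2 _ p.1.2 _ p.2.2
  rw [hset, Measure.real, (hW.iIndepFun_schauderFamily K).measure_inter_preimage_eq_mul _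
    fun p _ => hT p, ENNReal.toReal_prod, Fintype.prod_option, Fintype.prod_sigma, neg_add,
    Real.exp_add, ← Finset.sum_neg_distrib, Real.exp_sum, Finset.prod_range]
  have hnone : (gaussianReal 0 1).real S₁ = (W (schauderFamily K none ⁻¹' T none)).toReal := by
    rw [← hW.map_eval_one, Measure.real, Measure.map_apply (measurable_eval _) hS₁]
    rfl
  have hsome : ∀ (k : Fin K) (i : Fin (2 ^ (k : ℕ))),
      (gaussianReal 0 (2 ^ ((k : ℕ) + 2))⁻¹).real (S k i) =
      (W (schauderFamily K (some ⟨k, i⟩) ⁻¹' T (some ⟨k, i⟩))).toReal := by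
    intro k i
    rw [← hW.map_schauder i.2, Measure.real, Measure.map_apply (measurable_schauder _ _) (hS _ _)]
    rfl
  rw [← hnone]
  refine mul_le_mul h₁ ?_ (by positivity) (by positivity)
  refine Finset.prod_le_prod (fun _ _ => by positivity) fun k _ => ?_
  calc Real.exp (-(2 ^ (k : ℕ) * a k)) = ∏ _i : Fin (2 ^ (k : ℕ)), Real.exp (-a k) := by
        rw [Finset.prod_const, Finset.card_univ, Fintype.card_fin, ← Real.exp_nat_mul]
        push_cast
        ring_nf
    _ ≤ _ := Finset.prod_le_prod (fun _ _ => by positivity) fun i _ => by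
        rw [← hsome]
        exact h k i i.2

open ProbabilityTheory in
lemma IsWienerMeasure.exp_neg_le_measure_schauder {W : Measure PathSpace}
    (hW : IsWienerMeasure W) {S₁ : Set ℝ} {S : ℕ → ℕ → Set ℝ} {a₁ T : ℝ} {a : ℕ → ℝ}
    (hS₁ : MeasurableSet S₁) (hS : ∀ k i, MeasurableSet (S k i))
    (h₁ : Real.exp (-a₁) ≤ (gaussianReal 0 1).real S₁)
    (h : ∀ k, ∀ i < 2 ^ k, Real.exp (-a k) ≤ (gaussianReal 0 (2 ^ (k + 2))⁻¹).real (S k i))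
    (hT : ∀ K, a₁ + ∑ k ∈ Finset.range K, 2 ^ k * a k ≤ T) :
    Real.exp (-T) ≤
      W.real {ω | ω.1 (gridPt (2 ^ 0) 1) ∈ S₁ ∧ ∀ k, ∀ i < 2 ^ k, schauder k i ω ∈ S k i} := by
  have := hW.1
  let F : ℕ → Set PathSpace := fun K =>
    {ω | ω.1 (gridPt (2 ^ 0) 1) ∈ S₁ ∧ ∀ k < K, ∀ i < 2 ^ k, schauder k i ω ∈ S k i}
  have hset : {ω : PathSpace | ω.1 (gridPt (2 ^ 0) 1) ∈ S₁ ∧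
      ∀ k, ∀ i < 2 ^ k, schauder k i ω ∈ S k i} = ⋂ K, F K := by
    ext ω
    simp only [mem_ofPred_eq, mem_iInter, F]
    exact ⟨fun ⟨h1, h2⟩ K => ⟨h1, fun k _ => h2 k⟩,
      fun h => ⟨(h 0).1, fun k => (h (k + 1)).2 k k.lt_succ_self⟩⟩
  have hF : ∀ K, MeasurableSet (F K) := by
    intro K
    have : F K = (fun ω : PathSpace => ω.1 (gridPt (2 ^ 0) 1)) ⁻¹' S₁ ∩
        ⋂ k, ⋂ (_ : k < K), ⋂ i, ⋂ (_ : i < 2 ^ k), schauder k i ⁻¹' S k i := by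
      ext ω
      simp [F]
    rw [this]
    exact (measurable_eval _ hS₁).inter <| .iInter fun k => .iInter fun _ => .iInter fun i =>
      .iInter fun _ => measurable_schauder k i (hS k i)
  have hanti : Antitone F := fun K L hKL ω hω => ⟨hω.1, fun k hk => hω.2 k (hk.trans_le hKL)⟩
  have hlim := (ENNReal.continuousAt_toReal (measure_ne_top W _)).tendsto.comp
    (tendsto_measure_iInter_atTop (μ := W) (fun K => (hF K).nullMeasurableSet) hanti
      ⟨0, measure_ne_top _ _⟩)
  rw [hset]
  refine ge_of_tendsto' hlim fun K => ?_
  exact (Real.exp_le_exp.2 (neg_le_neg (hT K))).trans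
    (hW.exp_neg_le_measure_schauder_lt K hS₁ hS h₁ h)

/-- Two paths whose Schauder coefficients are close are close on dyadic grids. -/
lemma abs_sub_gridPt_le {ω η : PathSpace} {d₁ : ℝ} {d : ℕ → ℝ} (hd : ∀ k, 0 ≤ d k)
    (h₁ : |ω.1 (gridPt (2 ^ 0) 1) - η.1 (gridPt (2 ^ 0) 1)| ≤ d₁)
    (h : ∀ k, ∀ i < 2 ^ k, |schauder k i ω - schauder k i η| ≤ d k) (K j : ℕ) (hj : j ≤ 2 ^ K) :
    |ω.1 (gridPt (2 ^ K) j) - η.1 (gridPt (2 ^ K) j)| ≤ d₁ + ∑ k ∈ Finset.range K, d k := by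
  induction K generalizing j with
  | zero =>
    rw [Finset.sum_range_zero, add_zero]
    have hj1 : j ≤ 1 := by simpa using hj
    interval_cases j
    · have h0 : gridPt (2 ^ 0) 0 = 0 := Subtype.ext (by simp [gridPt, clampI])
      rw [h0, ω.2, η.2, sub_zero, abs_zero]
      exact (abs_nonneg _).trans h₁
    · exact h₁
  | succ K ih =>
    rw [Finset.sum_range_succ, ← add_assoc]
    rcases Nat.even_or_odd' j with ⟨i, rfl | rfl⟩
    · rw [gridPt_two_pow_succ]
      have := ih i (by rw [pow_succ] at hj; omega)
      linarith [hd K]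
    · have hi : i < 2 ^ K := by rw [pow_succ] at hj; omega
      have e1 := abs_le.1 (ih i hi.le)
      have e2 := abs_le.1 (ih (i + 1) hi)
      have e3 := abs_le.1 (h K i hi)
      unfold schauder at e3
      rw [abs_le]
      constructor <;> linarith [e1.1, e1.2, e2.1, e2.2, e3.1, e3.2]

lemma dist_le_of_abs_schauder_sub_le {ω η : PathSpace} {d₁ R : ℝ} {d : ℕ → ℝ} (hd : ∀ k, 0 ≤ d k)
    (h₁ : |ω.1 (gridPt (2 ^ 0) 1) - η.1 (gridPt (2 ^ 0) 1)| ≤ d₁)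
    (h : ∀ k, ∀ i < 2 ^ k, |schauder k i ω - schauder k i η| ≤ d k)
    (hR : ∀ K, d₁ + ∑ k ∈ Finset.range K, d k ≤ R) : dist ω η ≤ R := by
  have hR0 : 0 ≤ R := by simpa using ((abs_nonneg _).trans h₁).trans (by simpa using hR 0)
  rw [Subtype.dist_eq, ContinuousMap.dist_le hR0]
  intro t
  have hlim : Tendsto (fun K : ℕ => gridPt (2 ^ K) ⌊(t : ℝ) * ((2 ^ K : ℕ) : ℝ)⌋₊) atTop (𝓝 t) := by
    have hreal : Tendsto (fun K : ℕ => (⌊(t : ℝ) * ((2 ^ K : ℕ) : ℝ)⌋₊ : ℝ) / ((2 ^ K : ℕ) : ℝ))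
        atTop (𝓝 (t : ℝ)) :=
      (tendsto_nat_floor_mul_div_atTop t.2.1).comp
        (tendsto_natCast_atTop_atTop.comp (tendsto_pow_atTop_atTop_of_one_lt one_lt_two))
    have hclamp : Continuous clampI := by unfold clampI; fun_prop
    have ht : clampI t = t := Subtype.ext (by simp [clampI, t.2.1, t.2.2])
    have := (hclamp.tendsto (t : ℝ)).comp hreal
    rwa [ht] at this
  have hcont : Continuous fun s => dist (ω.1 s) (η.1 s) := by fun_prop
  refine le_of_tendsto' ((hcont.tendsto t).comp hlim) fun K => ?_
  refine (abs_sub_gridPt_le hd h₁ h K _ ?_).trans (hR K)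
  refine Nat.floor_le_of_le ?_
  exact mul_le_of_le_one_left (by positivity) t.2.2

lemma sum_range_ite_lt_le {u w : ℕ → ℝ} (hu : ∀ k, 0 ≤ u k) (hw : ∀ k, 0 ≤ w k) (m K : ℕ) :
    ∑ k ∈ Finset.range K, (if k < m then u k else w k) ≤
      ∑ k ∈ Finset.range m, u k + ∑ k ∈ Finset.range K, w (m + k) := by
  have h0 : ∀ k, 0 ≤ if k < m then u k else w k := fun k => by split_ifs; exacts [hu k, hw k]
  calc _ ≤ ∑ k ∈ Finset.range (m + K), (if k < m then u k else w k) :=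
        Finset.sum_le_sum_of_subset_of_nonneg (Finset.range_mono (by omega)) fun k _ _ => h0 k
    _ = _ := by
        rw [Finset.sum_range_add]
        congr 1
        · exact Finset.sum_congr rfl fun k hk => if_pos (Finset.mem_range.1 hk)
        · exact Finset.sum_congr rfl fun k _ => if_neg (by omega)

lemma natCast_add_one_le_mul_pow {g : ℝ} (hg : 1 < g) (m : ℕ) :
    (m : ℝ) + 1 ≤ (1 / (g - 1) + 1) * g ^ m := by
  have h1 : 0 < g - 1 := by linarith
  have h2 : 1 + (m : ℝ) * (g - 1) ≤ g ^ m := by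
    simpa using one_add_mul_le_pow (a := g - 1) (by linarith) m
  have h3 : (m : ℝ) ≤ 1 / (g - 1) * g ^ m := by
    rw [one_div, inv_mul_eq_div, le_div_iff₀ h1]
    linarith
  linarith [one_le_pow₀ hg.le (n := m)]

lemma summable_two_pow_mul_exp_neg_pow {g : ℝ} (hg : 1 < g) :
    Summable fun k : ℕ => (2 : ℝ) ^ k * (4 * Real.exp (-(2 * g ^ k))) := by
  have hev : ∀ᶠ k : ℕ in atTop, (k : ℝ) / g ^ k ≤ 1 :=
    ((tendsto_pow_const_div_const_pow_of_one_lt 1 hg).congr fun k => by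
      rw [pow_one]).eventually_le_const zero_lt_one
  have hgeom : Summable fun k : ℕ => 4 * (2 * Real.exp (-2)) ^ k := by
    refine (summable_geometric_of_lt_one (by positivity) ?_).mul_left 4
    have : (3 : ℝ) ≤ Real.exp 2 := by linarith [Real.add_one_le_exp 2]
    rw [Real.exp_neg, ← div_eq_mul_inv, div_lt_one (by positivity)]
    linarith
  refine hgeom.of_norm_bounded_eventually_nat ?_
  filter_upwards [hev] with k hk
  rw [div_le_one (by positivity)] at hk
  rw [Real.norm_of_nonneg (by positivity), mul_pow, ← Real.exp_nat_mul]
  have : Real.exp (-(2 * g ^ k)) ≤ Real.exp (k * -2) := Real.exp_le_exp.2 (by linarith)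
  have h2 : (0 : ℝ) < 2 ^ k := by positivity
  nlinarith

open ProbabilityTheory in
lemma exp_neg_le_gaussianReal_closedBall_two_pow {C g x : ℝ} {v : ℝ≥0} (hv : v ≠ 0) (hv1 : v ≤ 1)
    {m : ℕ} (hx : (|x| + 2⁻¹ ^ m) ^ 2 / (2 * v) ≤ 2 * (C + 1) ^ 2 * g ^ m) :
    Real.exp (-(m + 1 + 2 * (C + 1) ^ 2 * g ^ m)) ≤
      (gaussianReal 0 v).real (closedBall x (2⁻¹ ^ m)) := by
  refine le_trans ?_ (le_gaussianReal_real_closedBall hv hv1 x (by positivity))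
  have h1 : Real.exp (-m) ≤ 2⁻¹ ^ m := by
    rw [show (-(m : ℝ)) = m * (-1) by ring, Real.exp_nat_mul, Real.exp_neg]
    have : (2 : ℝ) ≤ Real.exp 1 := by linarith [Real.add_one_le_exp 1]
    gcongr
  calc Real.exp (-(m + 1 + 2 * (C + 1) ^ 2 * g ^ m))
      = Real.exp (-m) * Real.exp (-1 - 2 * (C + 1) ^ 2 * g ^ m) := by
        rw [← Real.exp_add]; ring_nf
    _ ≤ _ := by gcongr

open ProbabilityTheory in
lemma exp_neg_le_gaussianReal_closedBall_zero {b : ℝ} (hb : 1 < b) (hb2 : b ^ 2 < 2) (k : ℕ) :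
    Real.exp (-(4 * Real.exp (-(2 * (2 / b ^ 2) ^ k)))) ≤
      (gaussianReal 0 (2 ^ (k + 2))⁻¹).real (closedBall 0 (b⁻¹ ^ k)) := by
  have hb0 : 0 < b := by linarith
  refine le_trans ?_ (one_sub_le_gaussianReal_real_closedBall _ (by positivity))
  have hexp : -(b⁻¹ ^ k) ^ 2 / (2 * (((2 ^ (k + 2))⁻¹ : ℝ≥0) : ℝ)) = -(2 * (2 / b ^ 2) ^ k) := by
    push_cast
    rw [div_pow, pow_add, pow_right_comm b 2 k]
    field_simp
    norm_num
    exact inv_mul_cancel₀ (by positivity)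
  rw [hexp]
  have h1 : 1 ≤ (2 / b ^ 2) ^ k :=
    one_le_pow₀ ((one_le_div (by positivity)).2 hb2.le)
  have h2 : Real.exp (-(2 * (2 / b ^ 2) ^ k)) ≤ 1 / 4 := by
    calc _ ≤ Real.exp (-(1 + 1)) := Real.exp_le_exp.2 (by linarith)
      _ ≤ 1 / 4 := by
        have h3 : (2 : ℝ) ≤ Real.exp 1 := by linarith [Real.add_one_le_exp 1]
        rw [Real.exp_neg, Real.exp_add, one_div]
        exact inv_anti₀ (by norm_num) (by nlinarith)
  refine le_trans (le_of_eq ?_) (exp_neg_two_mul_le (p := 2 * Real.exp (-(2 * (2 / b ^ 2) ^ k)))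
    (by positivity) (by linarith))
  ring_nf

/-- Lower bound for the Wiener measure of balls around paths whose Schauder coefficients decay
geometrically. -/
lemma IsWienerMeasure.exists_exp_neg_le_measure_closedBall {W : Measure PathSpace}
    (hW : IsWienerMeasure W) {b C : ℝ} (hb : 1 < b) (hb2 : b ^ 2 < 2) (hC : 0 ≤ C)
    {η : PathSpace} (h₁ : |η.1 (gridPt (2 ^ 0) 1)| ≤ C)
    (h : ∀ k, ∀ i < 2 ^ k, |schauder k i η| ≤ C * b⁻¹ ^ k) :
    ∃ A > 0, ∃ R > 0, ∀ m : ℕ,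
      Real.exp (-(A * (4 / b ^ 2) ^ m)) ≤ W.real (closedBall η (R * b⁻¹ ^ m)) := by
  have := hW.1
  have hb0 : 0 < b := by linarith
  set g : ℝ := 2 / b ^ 2 with hg_def
  have hg : 1 < g := (one_lt_div (by positivity)).2 hb2
  have hg0 : 0 < g - 1 := by linarith
  have hbinv0 : 0 < b⁻¹ := by positivity
  have hbinv : b⁻¹ < 1 := inv_lt_one_of_one_lt₀ hb
  have hbinv' : 0 < 1 - b⁻¹ := by linarith
  have hb_half : 2⁻¹ ≤ b⁻¹ := inv_anti₀ hb0 (by nlinarith)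
  have hsum := summable_two_pow_mul_exp_neg_pow hg
  set f : ℕ → ℝ := fun k => (2 : ℝ) ^ k * (4 * Real.exp (-(2 * g ^ k))) with hf
  have hf0 : ∀ k, 0 ≤ f k := fun k => by positivity
  have hB0 : 0 ≤ ∑' k, f k := tsum_nonneg hf0
  set c : ℝ := 1 / (g - 1) + 1 with hc
  have hc0 : 0 < c := by positivity
  refine ⟨c + 2 * (C + 1) ^ 2 + ∑' k, f k, by positivity,
    c + (C + 1) * (1 - b⁻¹)⁻¹, by positivity, fun m => ?_⟩
  set L : ℝ := m + 1 + 2 * (C + 1) ^ 2 * g ^ m with hL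
  have hL0 : 0 ≤ L := by positivity
  have hm1 := natCast_add_one_le_mul_pow hg m
  have hr : (2⁻¹ : ℝ) ^ m ≤ 1 := pow_le_one₀ (by norm_num) (by norm_num)
  have hgm : 1 ≤ g ^ m := one_le_pow₀ hg.le
  refine (hW.exp_neg_le_measure_schauder
    (S₁ := closedBall (η.1 (gridPt (2 ^ 0) 1)) (2⁻¹ ^ m))
    (S := fun k i => if k < m then closedBall (schauder k i η) (2⁻¹ ^ m)
      else closedBall 0 (b⁻¹ ^ k))
    (a₁ := L) (a := fun k => if k < m then L else 4 * Real.exp (-(2 * g ^ k)))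
    measurableSet_closedBall
    (fun k i => by split_ifs <;> exact measurableSet_closedBall) ?_ ?_ ?_).trans ?_
  · refine exp_neg_le_gaussianReal_closedBall_two_pow one_ne_zero le_rfl ?_
    have h2 : (|η.1 (gridPt (2 ^ 0) 1)| + 2⁻¹ ^ m) ^ 2 ≤ (C + 1) ^ 2 := by gcongr
    have h3 : (C + 1) ^ 2 ≤ (C + 1) ^ 2 * g ^ m := le_mul_of_one_le_right (by positivity) hgm
    have h4 : 0 ≤ (C + 1) ^ 2 := by positivity
    rw [NNReal.coe_one]
    linarith
  · intro k i hi
    by_cases hk : k < m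
    · simp only [if_pos hk]
      refine exp_neg_le_gaussianReal_closedBall_two_pow (by positivity)
        (inv_le_one_of_one_le₀ (one_le_pow₀ one_le_two)) ?_
      have h2 : (2⁻¹ : ℝ) ^ m ≤ b⁻¹ ^ k :=
        (pow_le_pow_left₀ (by norm_num) hb_half m).trans
          (pow_le_pow_of_le_one hbinv0.le hbinv.le hk.le)
      calc (|schauder k i η| + 2⁻¹ ^ m) ^ 2 / (2 * (((2 ^ (k + 2))⁻¹ : ℝ≥0) : ℝ))
          ≤ (C * b⁻¹ ^ k + b⁻¹ ^ k) ^ 2 / (2 * (((2 ^ (k + 2))⁻¹ : ℝ≥0) : ℝ)) := by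
            have := h k i hi
            gcongr
        _ = 2 * (C + 1) ^ 2 * g ^ k := by
            push_cast
            rw [hg_def, div_pow, pow_add, pow_right_comm b 2 k]
            field_simp
            norm_num
            exact inv_mul_cancel₀ (by positivity)
        _ ≤ 2 * (C + 1) ^ 2 * g ^ m := by
            gcongr
            exact hg.le
    · simp only [if_neg hk]
      exact exp_neg_le_gaussianReal_closedBall_zero hb hb2 k
  · intro K
    have h2 : ∑ k ∈ Finset.range K, (2 : ℝ) ^ k * (if k < m then L else 4 * Real.exp (-(2 * g ^ k)))
        = ∑ k ∈ Finset.range K, (if k < m then (2 : ℝ) ^ k * L else f k) :=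
      Finset.sum_congr rfl fun k _ => by split_ifs <;> rfl
    have h3 := sum_range_ite_lt_le (u := fun k => (2 : ℝ) ^ k * L) (w := f)
      (fun k => by positivity) hf0 m K
    have h4 : ∑ k ∈ Finset.range K, f (m + k) ≤ ∑' k, f k := by
      refine le_trans ?_ (hsum.sum_le_tsum (Finset.range (m + K)) fun k _ => hf0 k)
      rw [Finset.sum_range_add]
      exact le_add_of_nonneg_left (Finset.sum_nonneg fun k _ => hf0 k)
    have h5 : ∑ k ∈ Finset.range m, (2 : ℝ) ^ k * L = (2 ^ m - 1) * L := by
      rw [← Finset.sum_mul, geom_sum_eq (by norm_num)]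
      norm_num
    have h6 : (4 / b ^ 2) ^ m = 2 ^ m * g ^ m := by
      rw [hg_def, ← mul_pow]; ring_nf
    have h7 : L ≤ (c + 2 * (C + 1) ^ 2) * g ^ m := by rw [hL]; linarith
    have h8 : (2 : ℝ) ^ m * L ≤ 2 ^ m * ((c + 2 * (C + 1) ^ 2) * g ^ m) := by gcongr
    have h9 : 1 ≤ (2 : ℝ) ^ m * g ^ m := one_le_mul_of_one_le_of_one_le (one_le_pow₀ one_le_two) hgm
    have h10 := mul_le_mul_of_nonneg_left h9 hB0
    rw [h2, h6]
    linarith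
  · refine measureReal_mono (fun ω hω => ?_) (measure_ne_top _ _)
    rw [mem_closedBall]
    refine dist_le_of_abs_schauder_sub_le (d₁ := 2⁻¹ ^ m)
      (d := fun k => if k < m then 2⁻¹ ^ m else (C + 1) * b⁻¹ ^ k)
      (fun k => by positivity) ?_ ?_ ?_
    · simpa [Real.dist_eq] using hω.1
    · intro k i hi
      have h2 := hω.2 k i hi
      by_cases hk : k < m
      · simpa [hk, Real.dist_eq] using h2
      · simp only [if_neg hk, mem_closedBall, dist_zero_right, Real.norm_eq_abs] at h2 ⊢
        have h3 := h k i hi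
        have h4 := abs_sub (schauder k i ω) (schauder k i η)
        linarith
    · intro K
      have h2 := sum_range_ite_lt_le (u := fun _ => (2⁻¹ : ℝ) ^ m)
        (w := fun k => (C + 1) * b⁻¹ ^ k) (fun k => by positivity) (fun k => by positivity) m K
      have h3 : ∑ k ∈ Finset.range K, (C + 1) * b⁻¹ ^ (m + k) ≤
          (C + 1) * (1 - b⁻¹)⁻¹ * b⁻¹ ^ m := by
        simp_rw [pow_add, ← mul_assoc]
        rw [← Finset.mul_sum, mul_right_comm]
        gcongr
        rw [← tsum_geometric_of_lt_one hbinv0.le hbinv]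
        exact (summable_geometric_of_lt_one hbinv0.le hbinv).sum_le_tsum _
          fun k _ => by positivity
      have h4 : ((m : ℝ) + 1) * 2⁻¹ ^ m ≤ c * b⁻¹ ^ m := by
        calc ((m : ℝ) + 1) * 2⁻¹ ^ m ≤ c * g ^ m * 2⁻¹ ^ m := by gcongr
          _ = c * ((b⁻¹) ^ m * (b⁻¹) ^ m) := by
            rw [mul_assoc, ← mul_pow, ← mul_pow, hg_def]
            congr 2
            field_simp
          _ ≤ c * b⁻¹ ^ m := by
            gcongr
            exact mul_le_of_le_one_left (by positivity) (pow_le_one₀ hbinv0.le hbinv.le)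
      rw [Finset.sum_const, Finset.card_range, nsmul_eq_mul] at h2
      linarith

lemma two_rpow_neg_natCast_rpow {β : ℝ} (n : ℕ) :
    (1 / (2 : ℝ) ^ n) ^ β = ((2 : ℝ) ^ β)⁻¹ ^ n := by
  rw [one_div, ← inv_pow, ← Real.inv_rpow (by norm_num), ← Real.rpow_natCast,
    ← Real.rpow_natCast, ← Real.rpow_mul (by norm_num), ← Real.rpow_mul (by norm_num), mul_comm]

lemma abs_eval_one_le_of_holder {β C : ℝ} {ω : PathSpace}
    (h : ∀ x y : unitInterval, |ω.1 x - ω.1 y| ≤ C * |(x : ℝ) - (y : ℝ)| ^ β) :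
    |ω.1 (gridPt (2 ^ 0) 1)| ≤ C := by
  have h1 := h (gridPt (2 ^ 0) 1) 0
  rw [coe_gridPt (by norm_num), ω.2] at h1
  simpa using h1

lemma abs_schauder_le_of_holder {β C : ℝ} (hβ : 0 ≤ β) (hC : 0 ≤ C) {ω : PathSpace}
    (h : ∀ x y : unitInterval, |ω.1 x - ω.1 y| ≤ C * |(x : ℝ) - (y : ℝ)| ^ β)
    {k i : ℕ} (hi : i < 2 ^ k) : |schauder k i ω| ≤ C * ((2 : ℝ) ^ β)⁻¹ ^ k := by
  have h1 := h (gridPt (2 ^ (k + 1)) (2 * i + 1)) (gridPt (2 ^ (k + 1)) (2 * i))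
  have h2 := h (gridPt (2 ^ (k + 1)) (2 * i + 1)) (gridPt (2 ^ (k + 1)) (2 * (i + 1)))
  have hi' : 2 * (i + 1) ≤ 2 ^ (k + 1) := by rw [pow_succ]; omega
  have hp : (0 : ℝ) < 2 ^ (k + 1) := by positivity
  have d1 : |(gridPt (2 ^ (k + 1)) (2 * i + 1) : ℝ) - gridPt (2 ^ (k + 1)) (2 * i)| =
      1 / 2 ^ (k + 1) := by
    rw [coe_gridPt (by omega), coe_gridPt (by omega), ← sub_div, abs_div]
    push_cast
    rw [abs_of_pos hp]
    simp
  have d2 : |(gridPt (2 ^ (k + 1)) (2 * i + 1) : ℝ) - gridPt (2 ^ (k + 1)) (2 * (i + 1))| =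
      1 / 2 ^ (k + 1) := by
    rw [coe_gridPt (by omega), coe_gridPt (by omega), ← sub_div, abs_div]
    push_cast
    rw [abs_of_pos hp, show 2 * (i : ℝ) + 1 - 2 * (i + 1) = -1 by ring]
    simp
  rw [d1, two_rpow_neg_natCast_rpow, gridPt_two_pow_succ] at h1
  rw [d2, two_rpow_neg_natCast_rpow, gridPt_two_pow_succ] at h2
  have h3 : C * ((2 : ℝ) ^ β)⁻¹ ^ (k + 1) ≤ C * ((2 : ℝ) ^ β)⁻¹ ^ k :=
    mul_le_mul_of_nonneg_left (pow_le_pow_of_le_one (by positivity)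
      (inv_le_one_of_one_le₀ (Real.one_le_rpow one_le_two hβ)) k.le_succ) hC
  rw [abs_le] at h1 h2 ⊢
  unfold schauder
  constructor <;> linarith

/-- Passage from a geometric sequence of radii to all small radii. -/
lemma exists_exp_neg_le_measure_ball {μ : Measure PathSpace} [IsFiniteMeasure μ] {η : PathSpace}
    {b A R s : ℝ} (hb : 1 < b) (hA : 0 < A) (hR : 0 < R) (hs : 0 ≤ s)
    (h : ∀ m : ℕ, Real.exp (-(A * (b ^ s) ^ m)) ≤ μ.real (closedBall η (R * b⁻¹ ^ m))) :
    ∃ D ≥ 1, ∀ ε > 0, ε ≤ R → Real.exp (-(D * ε ^ (-s))) ≤ μ.real (ball η ε) := by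
  have hb0 : 0 < b := by linarith
  refine ⟨max 1 (A * b ^ s * R ^ s), le_max_left _ _, fun ε hε hεR => ?_⟩
  obtain ⟨n, hn, hn'⟩ := exists_nat_pow_near ((one_le_div hε).2 hεR) hb
  have hrad : R * b⁻¹ ^ (n + 1) < ε := by
    rw [inv_pow, ← div_eq_mul_inv, div_lt_iff₀ (by positivity)]
    rwa [div_lt_iff₀ hε, mul_comm] at hn'
  refine le_trans (Real.exp_le_exp.2 (neg_le_neg ?_)) ((h (n + 1)).trans
    (measureReal_mono (closedBall_subset_ball hrad) (measure_ne_top _ _)))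
  have h1 : (b ^ s) ^ n ≤ R ^ s * ε ^ (-s) := by
    rw [← Real.rpow_natCast, ← Real.rpow_mul hb0.le, mul_comm, Real.rpow_mul hb0.le,
      Real.rpow_natCast, Real.rpow_neg hε.le, ← div_eq_mul_inv, ← Real.div_rpow hR.le hε.le]
    exact Real.rpow_le_rpow (by positivity) hn hs
  calc A * (b ^ s) ^ (n + 1) = A * b ^ s * (b ^ s) ^ n := by rw [pow_succ]; ring
    _ ≤ A * b ^ s * (R ^ s * ε ^ (-s)) := by gcongr
    _ = A * b ^ s * R ^ s * ε ^ (-s) := by ring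
    _ ≤ _ := by gcongr; exact le_max_right _ _

lemma log_neg_log_div_le {D s ε p : ℝ} (hD : 1 ≤ D) (hs : 0 ≤ s) (hε : 0 < ε) (hε1 : ε < 1)
    (hp : Real.exp (-(D * ε ^ (-s))) ≤ p) (hp1 : p ≤ 1) :
    Real.log (-Real.log p) / -Real.log ε ≤ Real.log D / -Real.log ε + s := by
  have hlog : 0 < -Real.log ε := by linarith [Real.log_neg hε hε1]
  have hp0 : 0 < p := (Real.exp_pos _).trans_le hp
  have h1 : -Real.log p ≤ D * ε ^ (-s) := by
    linarith [(Real.le_log_iff_exp_le hp0).2 hp]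
  have h2 : Real.log (D * ε ^ (-s)) = Real.log D + s * -Real.log ε := by
    rw [Real.log_mul (by positivity) (by positivity), Real.log_rpow hε]
    ring
  have h3 : Real.log (-Real.log p) ≤ Real.log D + s * -Real.log ε := by
    rcases (neg_nonneg.2 (Real.log_nonpos hp0.le hp1)).eq_or_lt with h0 | h0
    · rw [← h0, Real.log_zero]
      have := Real.log_nonneg hD
      positivity
    · rw [← h2]
      exact Real.log_le_log h0 h1
  rw [← mul_div_cancel_right₀ s hlog.ne', ← add_div]
  gcongr

lemma upperLocOrd_le_of_exp_neg_le {μ : Measure PathSpace} [IsProbabilityMeasure μ]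
    {η : PathSpace} {D R s : ℝ} (hD : 1 ≤ D) (hR : 0 < R) (hs : 0 ≤ s)
    (h : ∀ ε > 0, ε ≤ R → Real.exp (-(D * ε ^ (-s))) ≤ μ.real (ball η ε)) :
    upperLocOrd μ η ≤ (s : EReal) := by
  have hlim : Tendsto (fun ε : ℝ => ((Real.log D / -Real.log ε + s : ℝ) : EReal)) (𝓝[>] 0)
      (𝓝 (s : EReal)) := by
    refine (continuous_coe_real_ereal.tendsto s).comp ?_
    simpa using ((tendsto_neg_atBot_atTop.comp Real.tendsto_log_nhdsGT_zero).const_div_atTop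
      (Real.log D)).add_const s
  rw [← hlim.limsup_eq]
  refine limsup_le_limsup ?_
  filter_upwards [self_mem_nhdsWithin, Ioc_mem_nhdsGT hR, Ioo_mem_nhdsGT zero_lt_one]
    with ε hε hεR hε1
  exact EReal.coe_le_coe_iff.2
    (log_neg_log_div_le hD hs hε hε1.2 (h ε hε hεR.2) measureReal_le_one)

lemma IsWienerMeasure.upperLocOrd_le_of_mem_holderSet {W : Measure PathSpace}
    (hW : IsWienerMeasure W) {β : ℝ} (hβ : 0 < β) (hβ' : β < 1 / 2) {η : PathSpace}
    (hη : η ∈ holderSet β) : upperLocOrd W η ≤ ((2 * (β⁻¹ - 1) : ℝ) : EReal) := by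
  have := hW.1
  obtain ⟨C, hC⟩ := hη
  have hC0 : 0 ≤ C := (abs_nonneg _).trans (abs_eval_one_le_of_holder hC)
  have hb : (1 : ℝ) < 2 ^ β := Real.one_lt_rpow one_lt_two hβ
  have hb2 : ((2 : ℝ) ^ β) ^ 2 < 2 := by
    rw [← Real.rpow_natCast, ← Real.rpow_mul zero_le_two]
    calc (2 : ℝ) ^ (β * (2 : ℕ)) < 2 ^ (1 : ℝ) :=
          Real.rpow_lt_rpow_of_exponent_lt one_lt_two (by push_cast; linarith)
      _ = 2 := Real.rpow_one 2
  have hs : (0 : ℝ) ≤ 2 * (β⁻¹ - 1) := by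
    have : 1 ≤ β⁻¹ := (one_le_inv₀ hβ).2 (by linarith)
    linarith
  have hpow : 4 / ((2 : ℝ) ^ β) ^ 2 = ((2 : ℝ) ^ β) ^ (2 * (β⁻¹ - 1)) := by
    rw [← Real.rpow_mul zero_le_two, show β * (2 * (β⁻¹ - 1)) = (2 : ℕ) - β * (2 : ℕ) by
      push_cast; field_simp, Real.rpow_sub two_pos, Real.rpow_mul zero_le_two,
      Real.rpow_natCast, Real.rpow_natCast]
    norm_num
  obtain ⟨A, hA, R, hR, hball⟩ := hW.exists_exp_neg_le_measure_closedBall hb hb2 hC0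
    (abs_eval_one_le_of_holder hC) fun k i hi => abs_schauder_le_of_holder hβ.le hC0 hC hi
  rw [hpow] at hball
  obtain ⟨D, hD, hball'⟩ := exists_exp_neg_le_measure_ball hb hA hR hs hball
  exact upperLocOrd_le_of_exp_neg_le hD hR hs hball'

/-- Upper bound of the upper local order of the Wiener measure on nearly
`α`-Hölder paths: for `α ∈ (0,1/2]` and `ω̄ ∈ C_α^-`,
`overline-ord_loc W(ω̄) ≤ 2(α⁻¹ - 1)`. -/
theorem upper_ord_le_holder (W : Measure PathSpace) (hW : IsWienerMeasure W)
    (α : ℝ) (hα : 0 < α) (hα' : α ≤ 1/2)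
    (ωb : PathSpace) (hωb : ωb ∈ holderMinus α) :
    upperLocOrd W ωb ≤ ((2 * (α⁻¹ - 1) : ℝ) : EReal) := by
  have hlim : Tendsto (fun β : ℝ => ((2 * (β⁻¹ - 1) : ℝ) : EReal)) (𝓝[<] α)
      (𝓝 ((2 * (α⁻¹ - 1) : ℝ) : EReal)) :=
    (continuous_coe_real_ereal.tendsto _).comp
      ((((tendsto_inv₀ hα.ne').sub_const 1).const_mul 2).mono_left nhdsWithin_le_nhds)
  refine ge_of_tendsto hlim ?_
  filter_upwards [Ioo_mem_nhdsLT hα] with β hβ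
  exact hW.upperLocOrd_le_of_mem_holderSet hβ.1 (hβ.2.trans_le hα')
    (mem_iInter₂.1 hωb β hβ)

end Multifractal
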